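/- For every square-free word w over {0,1,2} and every word v that is an image of w under the substitution h, the word v is square-free. -/

import Mathlib

/-- A word is *square-free* if it contains no factor of the form `u ++ u`
with `u` nonempty. -/
def SqFree {α : Type*} (w : List α) : Prop :=
  ∀ u : List α, u ≠ [] → ¬ (u ++ u) <:+: w

/-- The word `p̂ = 1202120121021201021`. -/
def phat : List (Fin 3) := [1,2,0,2,1,2,0,1,2,1,0,2,1,2,0,1,0,2,1]

/-- The palindrome `p = mirror(p̂) ++ 0 ++ p̂`. -/
def pal : List (Fin 3) := phat.reverse ++ 0 :: phat

/-- The number of occurrences of a (nonempty) word `u` as a factor of `v`. -/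
def occCount (u v : List (Fin 3)) : ℕ :=
  (List.range v.length).countP (fun i => (v.drop i).take u.length == u)

/-- A word `v` is *nice* if `p v p` is square-free and contains exactly two
occurrences of `p̂` and exactly two occurrences of its mirror image. -/
def IsNice (v : List (Fin 3)) : Prop :=
  SqFree (pal ++ v ++ pal) ∧ occCount phat (pal ++ v ++ pal) = 2 ∧
    occCount phat.reverse (pal ++ v ++ pal) = 2

/-- `lword n` is the lexicographically least nice word of length `n`
(the empty word if no nice word of length `n` exists). -/
noncomputable def lword (n : ℕ) : List (Fin 3) := by
  classical
  exact if h : {w : List (Fin 3) | IsNice w ∧ w.length = n}.Nonempty then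
    Set.IsWF.min
      (Set.Finite.isWF
        ((List.finite_length_eq (Fin 3) n).subset (fun _ hw => hw.2))) h
  else []

/-- A set of words is *mirror-free* if it does not contain both a word and its
(distinct) mirror image. -/
def MirrorFree (S : Set (List (Fin 3))) : Prop :=
  ∀ w ∈ S, w ≠ w.reverse → w.reverse ∉ S

/-- `S` is an `n`-good set: a mirror-free set of nice words of length `n` such that
for all `i ∈ {2n+100, …, 7n}` and all distinct `u v ∈ S`, the words
`p u p v p lᵢ`, `p ū p v p lᵢ`, `p u p v̄ p l̄ᵢ` and `p ū p v̄ p l̄ᵢ` are square-free. -/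
def GoodSet (n : ℕ) (S : Set (List (Fin 3))) : Prop :=
  (∀ w ∈ S, IsNice w ∧ w.length = n) ∧ MirrorFree S ∧
    ∀ i : ℕ, 2 * n + 100 ≤ i → i ≤ 7 * n → ∀ u ∈ S, ∀ v ∈ S, u ≠ v →
      SqFree (pal ++ u ++ pal ++ v ++ pal ++ lword i) ∧
      SqFree (pal ++ u.reverse ++ pal ++ v ++ pal ++ lword i) ∧
      SqFree (pal ++ u ++ pal ++ v.reverse ++ pal ++ (lword i).reverse) ∧
      SqFree (pal ++ u.reverse ++ pal ++ v.reverse ++ pal ++ (lword i).reverse)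

/-- `mirrorIf r w` is the mirror image of `w` if `r = true`, and `w` itself otherwise. -/
def mirrorIf (r : Bool) (w : List (Fin 3)) : List (Fin 3) :=
  if r then w.reverse else w

/-- The nondeterministic substitution `h`. -/
def himg : Fin 3 → Set (List (Fin 3)) :=
  ![{[0,1,2,1,0,2,1,2,0,2,1,0,2,0,1,0,2,1,2,0,1,2,1,0],
     [0,1,2,1,0,2,1,2,0,2,1,0,2,0,1,2,0,2,1,2,0,1,2,1,0]},
    {[1,2,0,2,1,0,2,0,1,0,2,1,0,1,2,1,0,2,0,1,2,0,2,1],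
     [1,2,0,2,1,0,2,0,1,0,2,1,0,1,2,0,1,0,2,0,1,2,0,2,1]},
    {[2,0,1,0,2,1,0,1,2,1,0,2,1,2,0,2,1,0,1,2,0,1,0,2],
     [2,0,1,0,2,1,0,1,2,1,0,2,1,2,0,1,2,1,0,1,2,0,1,0,2]}]

/-- `v` is an image of `w` under the substitution `h`: `v` is obtained by replacing
each letter `c` of `w` by some word of `himg c`. -/
def IsImage (w v : List (Fin 3)) : Prop :=
  ∃ vs : List (List (Fin 3)), List.Forall₂ (fun c u => u ∈ himg c) w vs ∧ v = vs.flatten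

/-!
Every word of `h(c)` begins with a marker of length 13 which occurs in images under `h` only at the
beginning of a block of `c`, so an image can be cut into blocks at each marker and the letter is
recovered. Let `u u` be a square in an image of a square-free word `w`. If it does not cover two
consecutive blocks, then it lies in the image of at most three letters, and such images are
square-free by computation. Otherwise one copy of `u`, hence both, contains a marker `m`; write
`u = p m q` with no marker inside `p`. Cutting at the two copies of `m`, the word `m q p` is the
image of a factor `s c` of `w`. Either the marker of this `c` lies in the first copy of `u`, and
then `s c` is repeated in `w`; or the block of `c` ends with `p` and only `s` is repeated, but then
the block before the first copy of `m` ends with the same letter as `p`, so it is also a block of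
`c`, and `w` contains `c s c s`.
-/

namespace SqFree

variable {α β : Type*} {w : List α}

theorem of_isInfix {v : List α} (hw : SqFree w) (hv : v <:+: w) : SqFree v :=
  fun u hu huu => hw u hu (huu.trans hv)

theorem of_map (f : α → β) (h : SqFree (w.map f)) : SqFree w :=
  fun u hu huu => h (u.map f) (by simpa using hu) (by simpa using huu.map f)

theorem ne_of_cons_cons {a b : α} (h : SqFree (a :: b :: w)) : a ≠ b := by
  rintro rfl
  exact h [a] (by simp) ⟨[], w, rfl⟩

end SqFree

section SubstImage

variable {α β : Type*}

/-- The set of images of the word `w` under the nondeterministic substitution `σ`; for `σ = himg`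
membership unfolds to `IsImage`. -/
def substImage (σ : β → Set (List α)) (w : List β) : Set (List α) :=
  {v | ∃ vs : List (List α), List.Forall₂ (fun c b => b ∈ σ c) w vs ∧ v = vs.flatten}

variable {σ : β → Set (List α)} {w w₁ w₂ : List β} {c : β} {v : List α}

@[simp]
theorem mem_substImage_nil : v ∈ substImage σ [] ↔ v = [] := by
  simp [substImage]

theorem mem_substImage_cons :
    v ∈ substImage σ (c :: w) ↔ ∃ b ∈ σ c, ∃ v' ∈ substImage σ w, b ++ v' = v := by
  constructor
  · rintro ⟨_, hvs, rfl⟩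
    obtain ⟨b, vs, hb, hvs', rfl⟩ := List.forall₂_cons_left_iff.1 hvs
    exact ⟨b, hb, vs.flatten, ⟨vs, hvs', rfl⟩, rfl⟩
  · rintro ⟨b, hb, _, ⟨vs, hvs, rfl⟩, rfl⟩
    exact ⟨b :: vs, .cons hb hvs, rfl⟩

@[simp]
theorem mem_substImage_singleton : v ∈ substImage σ [c] ↔ v ∈ σ c := by
  simp [mem_substImage_cons]

theorem exists_of_mem_substImage_append (hv : v ∈ substImage σ (w₁ ++ w₂)) :
    ∃ v₁ ∈ substImage σ w₁, ∃ v₂ ∈ substImage σ w₂, v₁ ++ v₂ = v := by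
  induction w₁ generalizing v with
  | nil => exact ⟨[], by simp, v, hv, rfl⟩
  | cons c w₁ ih =>
    obtain ⟨b, hb, v', hv', rfl⟩ := mem_substImage_cons.1 hv
    obtain ⟨v₁, hv₁, v₂, hv₂, rfl⟩ := ih hv'
    exact ⟨b ++ v₁, mem_substImage_cons.2 ⟨b, hb, v₁, hv₁, rfl⟩, v₂, hv₂, by simp⟩

theorem isInfix_short_image_or_blocks_isInfix {x u y : List α}
    (h : x ++ u ++ y ∈ substImage σ w) :
    (∃ w', w' <:+: w ∧ w'.length ≤ 3 ∧ ∃ v ∈ substImage σ w', u <:+: v) ∨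
      ∃ c d, ∃ b ∈ σ c, ∃ b' ∈ σ d, b ++ b' <:+: u := by
  induction w generalizing x with
  | nil => exact .inl ⟨[], List.infix_rfl, by simp, _, h, x, y, rfl⟩
  | cons c w ih =>
    obtain ⟨b, hb, v, hv, hbv⟩ := mem_substImage_cons.1 h
    rw [List.append_assoc, List.append_eq_append_iff] at hbv
    obtain ⟨x', rfl, rfl⟩ | ⟨e, rfl, he⟩ := hbv
    · refine (ih (x := x') (by simpa using hv)).imp_left ?_
      rintro ⟨w', hw', hlen, hu⟩
      exact ⟨w', hw'.trans (List.suffix_cons c w).isInfix, hlen, hu⟩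
    · match w, hv with
      | [], _ => exact .inl ⟨_, List.infix_rfl, by simp, _, h, x, y, rfl⟩
      | [d], _ => exact .inl ⟨_, List.infix_rfl, by simp, _, h, x, y, rfl⟩
      | d₁ :: d₂ :: w, hv =>
        obtain ⟨b₁, hb₁, v₁, hv₁, rfl⟩ := mem_substImage_cons.1 hv
        obtain ⟨b₂, hb₂, v₂, -, rfl⟩ := mem_substImage_cons.1 hv₁
        have hcover : u <+: e ++ b₁ ++ b₂ ∨ e ++ b₁ ++ b₂ <+: u :=
          List.prefix_or_prefix_of_prefix (l₃ := u ++ y) (List.prefix_append u y)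
            ⟨v₂, by rw [he]; simp⟩
        refine hcover.imp (fun hu => ?_) (fun hu => ?_)
        · refine ⟨[c, d₁, d₂], (List.prefix_append [c, d₁, d₂] w).isInfix, by simp,
            (x ++ e) ++ (b₁ ++ b₂), ?_, ?_⟩
          · exact mem_substImage_cons.2 ⟨_, hb, _, mem_substImage_cons.2
              ⟨_, hb₁, _, mem_substImage_singleton.2 hb₂, rfl⟩, rfl⟩
          · exact hu.isInfix.trans ⟨x, [], by simp⟩
        · exact ⟨d₁, d₂, b₁, hb₁, b₂, hb₂, List.IsInfix.trans ⟨e, [], by simp⟩ hu.isInfix⟩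

end SubstImage

/-- A choice of a *marker* `m c` for each letter `c`: a common prefix of all blocks of `σ c`
which occurs in images under `σ` only at the beginning of a block of `c`. Since the markers have
equal lengths, it is enough to look at the words formed by a block and the marker of the next
block. -/
structure IsMarking {α β : Type*} (σ : β → Set (List α)) (m : β → List α) : Prop where
  ne_nil (c : β) : m c ≠ []
  length_eq (c d : β) : (m c).length = (m d).length
  isPrefix {c : β} {b : List α} (hb : b ∈ σ c) : m c <+: b
  eq_nil_or_eq {a c d : β} {b x y : List α} (hb : b ∈ σ c) (h : b ++ m d = x ++ m a ++ y) :
    (x = [] ∧ a = c) ∨ x = b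

theorem exists_append_of_exists_isInfix {α β : Type*} {m : β → List α} {u : List α}
    (hm : ∀ c, m c ≠ []) (hu : ∃ c, m c <:+: u) :
    ∃ p c q, p ++ m c ++ q = u ∧ ∀ d, ¬ m d <:+: p := by
  obtain ⟨c, p, q, rfl⟩ := hu
  induction hn : p.length using Nat.strong_induction_on generalizing p c q with
  | _ n ih =>
    by_cases hp : ∃ d, m d <:+: p
    · obtain ⟨d, p', q', rfl⟩ := hp
      have hd := List.length_pos_iff.2 (hm d)
      have hlt : p'.length < n := by
        simp only [List.length_append] at hn
        omega
      simpa using ih _ hlt d p' (q' ++ m c ++ q) rfl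
    · exact ⟨p, c, q, rfl, not_exists.1 hp⟩

namespace IsMarking

variable {α β : Type*} {σ : β → Set (List α)} {m : β → List α}
  {w s t : List β} {a c d : β} {b b' g u v x y z : List α}

theorem block_ne_nil (hm : IsMarking σ m) (hb : b ∈ σ c) : b ≠ [] :=
  (hm.isPrefix hb).ne_nil (hm.ne_nil c)

theorem isPrefix_of_mem_substImage (hm : IsMarking σ m) (hv : v ∈ substImage σ (c :: w)) :
    m c <+: v := by
  obtain ⟨b, hb, v', -, rfl⟩ := mem_substImage_cons.1 hv
  exact (hm.isPrefix hb).trans (List.prefix_append b v')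

theorem eq_nil_of_nil_mem_substImage (hm : IsMarking σ m) (h : [] ∈ substImage σ w) :
    w = [] := by
  cases w with
  | nil => rfl
  | cons c w => exact absurd (List.prefix_nil.1 (hm.isPrefix_of_mem_substImage h)) (hm.ne_nil c)

theorem eq_nil_and_eq_of_block_eq (hm : IsMarking σ m) (hb : b ∈ σ c)
    (h : b = x ++ m a ++ y) : x = [] ∧ a = c := by
  refine (hm.eq_nil_or_eq (d := a) (y := y ++ m a) hb (by simp [h])).resolve_right fun hxb => ?_
  simp [hxb, hm.ne_nil a] at h

theorem eq_nil_and_eq_of_length_lt (hm : IsMarking σ m) (hb : b ∈ σ c)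
    (hv : v ∈ substImage σ w) (h : b ++ v = x ++ m a ++ y) (hx : x.length < b.length) :
    x = [] ∧ a = c := by
  obtain ⟨d, z, hz⟩ : ∃ d z, b ++ m d = x ++ m a ++ z := by
    cases w with
    | nil =>
      rw [mem_substImage_nil.1 hv, List.append_nil] at h
      exact ⟨a, y ++ m a, by rw [h]; simp⟩
    | cons d w =>
      obtain ⟨v, rfl⟩ := hm.isPrefix_of_mem_substImage hv
      have hle : (x ++ m a).length ≤ (b ++ m d).length := by
        simp only [List.length_append, hm.length_eq a d]
        omega
      obtain ⟨z, hz⟩ : x ++ m a <+: b ++ m d :=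
        List.prefix_of_prefix_length_le ⟨y, h.symm⟩ ⟨v, by simp⟩ hle
      exact ⟨d, z, hz.symm⟩
  exact (hm.eq_nil_or_eq hb hz).resolve_right fun hxb => hx.ne (congrArg List.length hxb)

theorem exists_split_at_marker (hm : IsMarking σ m) (h : x ++ m a ++ y ∈ substImage σ w) :
    ∃ s t, w = s ++ a :: t ∧ x ∈ substImage σ s ∧ m a ++ y ∈ substImage σ (a :: t) := by
  induction w generalizing x with
  | nil => simp [hm.ne_nil a] at h
  | cons c w ih =>
    obtain ⟨b, hb, v, hv, hbv⟩ := mem_substImage_cons.1 h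
    rcases lt_or_ge x.length b.length with hlt | hle
    · obtain ⟨rfl, rfl⟩ := hm.eq_nil_and_eq_of_length_lt hb hv hbv hlt
      exact ⟨[], w, rfl, by simp, by simpa using h⟩
    · obtain ⟨x', rfl⟩ : b <+: x :=
        List.prefix_of_prefix_length_le ⟨v, hbv⟩ ⟨m a ++ y, by simp⟩ hle
      obtain rfl : v = x' ++ m a ++ y := by simpa using hbv
      obtain ⟨s, t, rfl, hs, ht⟩ := ih hv
      exact ⟨c :: s, t, rfl, mem_substImage_cons.2 ⟨b, hb, x', hs, rfl⟩, ht⟩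

theorem eq_singleton_of_mem_substImage (hm : IsMarking σ m) (hb : b ∈ σ c)
    (h : b ∈ substImage σ t) : t = [c] := by
  cases t with
  | nil => exact absurd (mem_substImage_nil.1 h) (hm.block_ne_nil hb)
  | cons d t =>
    obtain ⟨b', hb', v, hv, rfl⟩ := mem_substImage_cons.1 h
    cases t with
    | nil =>
      obtain ⟨r, rfl⟩ := hm.isPrefix hb'
      rw [(hm.eq_nil_and_eq_of_block_eq (x := []) (a := d) (y := r ++ v) hb (by simp)).2]
    | cons e t =>
      obtain ⟨r, rfl⟩ := hm.isPrefix_of_mem_substImage hv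
      exact absurd (hm.eq_nil_and_eq_of_block_eq (a := e) (y := r) hb (by simp)).1
        (hm.block_ne_nil hb')

theorem isPrefix_of_mem_substImage_append (hm : IsMarking σ m) (hs : g ∈ substImage σ s)
    (ht : g ++ z ∈ substImage σ t) : s <+: t := by
  induction s generalizing g t with
  | nil => exact List.nil_prefix
  | cons c s ih =>
    obtain ⟨b, hb, g', hg', rfl⟩ := mem_substImage_cons.1 hs
    cases s with
    | nil =>
      obtain ⟨r, rfl⟩ := hm.isPrefix hb
      obtain ⟨t₁, t₂, rfl, ht₁, -⟩ :=
        hm.exists_split_at_marker (x := []) (a := c) (y := r ++ g' ++ z) (by simpa using ht)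
      rw [hm.eq_nil_of_nil_mem_substImage ht₁]
      exact List.prefix_append [c] t₂
    | cons d s =>
      obtain ⟨r, rfl⟩ := hm.isPrefix_of_mem_substImage hg'
      obtain ⟨t₁, t₂, rfl, ht₁, ht₂⟩ :=
        hm.exists_split_at_marker (x := b) (a := d) (y := r ++ z) (by simpa using ht)
      rw [hm.eq_singleton_of_mem_substImage hb ht₁]
      exact (List.prefix_append_right_inj [c]).2 (ih hg' (by simpa using ht₂))

theorem eq_of_mem_substImage (hm : IsMarking σ m) (hs : v ∈ substImage σ s)
    (ht : v ∈ substImage σ t) : s = t :=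
  List.infix_antisymm (hm.isPrefix_of_mem_substImage_append (z := []) hs (by simpa)).isInfix
    (hm.isPrefix_of_mem_substImage_append (z := []) ht (by simpa)).isInfix

theorem append_singleton_isPrefix (hm : IsMarking σ m) (hs : g ∈ substImage σ s)
    (ht : g ++ m c ++ z ∈ substImage σ t) : s ++ [c] <+: t := by
  obtain ⟨t₁, t₂, rfl, ht₁, -⟩ := hm.exists_split_at_marker ht
  rw [hm.eq_of_mem_substImage hs ht₁]
  exact ⟨t₂, by simp⟩

theorem exists_isInfix_of_blocks_isInfix (hm : IsMarking σ m) (hb : b ∈ σ c) (hb' : b' ∈ σ d)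
    (h : b ++ b' <:+: u ++ u) : ∃ a, m a <:+: u := by
  obtain ⟨r, rfl⟩ := hm.isPrefix hb
  obtain ⟨x, y, hxy⟩ := h
  have hsplit : (x ++ m c) ++ (r ++ b' ++ y) = u ++ u := by simpa using hxy
  obtain ⟨e, he, -⟩ | ⟨e, -, he⟩ := List.append_eq_append_iff.1 hsplit
  · exact ⟨c, x, e, he.symm⟩
  · exact ⟨d, (hm.isPrefix hb').isInfix.trans ⟨e ++ r, y, by simp [he]⟩⟩

/-- The two possible positions of the boundary between the two copies of `u = p ++ m a ++ q`:
it either leaves the marker of the last block of `m a ++ q ++ p` in the first copy, or cuts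
that block so that `p` is one of its suffixes. -/
theorem isPrefix_or_getLast?_eq (hm : IsMarking σ m) {p q : List α}
    (hp : ∀ d, ¬ m d <:+: p) (hs : g ∈ substImage σ s) (hb : b ∈ σ c)
    (hgb : g ++ b = m a ++ q ++ p) (ht : m a ++ q ++ y ∈ substImage σ t) :
    s ++ [c] <+: t ∨ s <+: t ∧ p ≠ [] ∧ p.getLast? = b.getLast? := by
  obtain ⟨e, he, rfl⟩ | ⟨e, -, rfl⟩ := List.append_eq_append_iff.1 hgb
  · rw [he] at ht
    by_cases hce : m c <+: e
    · obtain ⟨r, rfl⟩ := hce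
      exact .inl (hm.append_singleton_isPrefix (z := r ++ y) hs (by simpa using ht))
    · have hp_ne : p ≠ [] := by
        rintro rfl
        exact hce (by simpa using hm.isPrefix hb)
      refine .inr ⟨hm.isPrefix_of_mem_substImage_append (z := e ++ y) hs (by simpa using ht),
        hp_ne, (List.getLast?_append_of_ne_nil e hp_ne).symm⟩
  · exact absurd ((hm.isPrefix hb).isInfix.trans (List.suffix_append e b).isInfix) (hp c)

theorem exists_concat_of_getLast?_eq (hm : IsMarking σ m)
    (hlast : ∀ {c d b b'}, b ∈ σ c → b' ∈ σ d → b.getLast? = b'.getLast? → c = d)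
    (hv : v ∈ substImage σ w) (hv_ne : v ≠ []) (hb : b ∈ σ c) (h : v.getLast? = b.getLast?) :
    ∃ w', w = w' ++ [c] := by
  rcases w.eq_nil_or_concat' with rfl | ⟨w', d, rfl⟩
  · exact absurd (mem_substImage_nil.1 hv) hv_ne
  · obtain ⟨v', -, b', hb', rfl⟩ := exists_of_mem_substImage_append hv
    rw [mem_substImage_singleton] at hb'
    rw [List.getLast?_append_of_ne_nil v' (hm.block_ne_nil hb')] at h
    exact ⟨w', by rw [hlast hb' hb h]⟩

theorem not_sqFree_of_marked_square (hm : IsMarking σ m)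
    (hlast : ∀ {c d b b'}, b ∈ σ c → b' ∈ σ d → b.getLast? = b'.getLast? → c = d)
    (h : x ++ (u ++ u) ++ y ∈ substImage σ w) (hu : ∃ a, m a <:+: u) : ¬ SqFree w := by
  obtain ⟨p, a, q, rfl, hp⟩ := exists_append_of_exists_isInfix hm.ne_nil hu
  obtain ⟨w₁, w', rfl, hw₁, hw'⟩ :=
    hm.exists_split_at_marker (x := x ++ p) (a := a) (y := q ++ p ++ m a ++ q ++ y)
      (by simpa using h)
  obtain ⟨w₂, w₃, hw₂₃, hw₂, hw₃⟩ :=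
    hm.exists_split_at_marker (x := m a ++ q ++ p) (a := a) (y := q ++ y) (by simpa using hw')
  rw [hw₂₃]
  rcases w₂.eq_nil_or_concat' with rfl | ⟨s, c, rfl⟩
  · simp [hm.ne_nil a] at hw₂
  obtain ⟨g, hg, b, hb, hgb⟩ := exists_of_mem_substImage_append hw₂
  rw [mem_substImage_singleton] at hb
  obtain ⟨t, ht⟩ | ⟨⟨t, ht⟩, hp_ne, hlast_eq⟩ :=
    hm.isPrefix_or_getLast?_eq (y := y) hp hg hb hgb (by simpa using hw₃)
  · exact fun hw => hw (s ++ [c]) (by simp) ⟨w₁, t, by simp [← ht]⟩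
  · obtain ⟨w₁', rfl⟩ := hm.exists_concat_of_getLast?_eq hlast hw₁ (by simp [hp_ne]) hb
      ((List.getLast?_append_of_ne_nil x hp_ne).trans hlast_eq)
    exact fun hw => hw (c :: s) (by simp) ⟨w₁', t, by simp [← ht]⟩

theorem sqFree_of_mem_substImage (hm : IsMarking σ m)
    (hlast : ∀ {c d b b'}, b ∈ σ c → b' ∈ σ d → b.getLast? = b'.getLast? → c = d)
    (hshort : ∀ w, SqFree w → w.length ≤ 3 → ∀ v ∈ substImage σ w, SqFree v)
    (hw : SqFree w) (hv : v ∈ substImage σ w) : SqFree v := by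
  rintro u hu ⟨x, y, rfl⟩
  obtain ⟨w', hw', hlen, v', hv', huv'⟩ | ⟨c, d, b, hb, b', hb', hbb'⟩ :=
    isInfix_short_image_or_blocks_isInfix hv
  · exact hshort w' (hw.of_isInfix hw') hlen v' hv' u hu huv'
  · exact hm.not_sqFree_of_marked_square hlast hv
      (hm.exists_isInfix_of_blocks_isInfix hb hb' hbb') hw

end IsMarking

section Decision

variable {α : Type*} [BEq α] [LawfulBEq α]

/-- Tests that the word `p ++ l` has no prefix `u ++ u` with `u` longer than `p`. -/
def noSquarePrefix (p : List α) : List α → Bool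
  | [] => true
  | a :: l => !(p ++ [a]).isPrefixOf l && noSquarePrefix (p ++ [a]) l

theorem not_isPrefix_of_noSquarePrefix {p l q : List α} (h : noSquarePrefix p l) (hq : q ≠ []) :
    ¬ q ++ p ++ q <+: l := by
  induction l generalizing p q with
  | nil => simp [hq]
  | cons a l ih =>
    simp only [noSquarePrefix, Bool.and_eq_true, Bool.not_eq_true', ← Bool.not_eq_true,
      List.isPrefixOf_iff_prefix] at h
    obtain ⟨a', q', rfl⟩ := List.exists_cons_of_ne_nil hq
    intro hpre
    obtain ⟨rfl, htail⟩ : a' = a ∧ q' ++ p ++ a' :: q' <+: l := by simpa using hpre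
    rcases eq_or_ne q' [] with rfl | hq'
    · exact h.1 (by simpa using htail)
    · exact ih h.2 hq' (by simpa using htail)

/-- Tests square-freeness. It evaluates fast enough in the kernel for words of length 75. -/
def isSqFree : List α → Bool
  | [] => true
  | a :: l => noSquarePrefix [] (a :: l) && isSqFree l

theorem sqFree_of_isSqFree {w : List α} (h : isSqFree w) : SqFree w := by
  induction w with
  | nil => simp [SqFree]
  | cons a w ih =>
    simp only [isSqFree, Bool.and_eq_true] at h
    intro u hu huu
    rcases List.infix_cons_iff.1 huu with hpre | hinf
    · exact not_isPrefix_of_noSquarePrefix h.1 hu (by simpa using hpre)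
    · exact ih h.2 u hu hinf

end Decision

/-- The shorter word of `himg 0`. -/
def shortBlock : List (Fin 3) := [0,1,2,1,0,2,1,2,0,2,1,0,2,0,1,0,2,1,2,0,1,2,1,0]

/-- The longer word of `himg 0`. -/
def longBlock : List (Fin 3) := [0,1,2,1,0,2,1,2,0,2,1,0,2,0,1,2,0,2,1,2,0,1,2,1,0]

/-- The words of `himg c`, as a list; `h` commutes with the cyclic shift of the alphabet. -/
def blocks (c : Fin 3) : List (List (Fin 3)) :=
  [shortBlock.map (· + c), longBlock.map (· + c)]

/-- The marker of `c`, a common prefix of the two words of `himg c`. Its length 13 is the least for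
which `IsMarking himg marker` holds. -/
def marker (c : Fin 3) : List (Fin 3) :=
  (shortBlock.take 13).map (· + c)

theorem mem_himg_iff {b : List (Fin 3)} {c : Fin 3} : b ∈ himg c ↔ b ∈ blocks c := by
  fin_cases c <;> simp [himg, blocks, shortBlock, longBlock]

theorem getLast?_of_mem_blocks : ∀ c, ∀ b ∈ blocks c, b.getLast? = some c := by
  decide +kernel

theorem marker_isPrefix_of_mem_blocks : ∀ c, ∀ b ∈ blocks c, marker c <+: b := by
  decide +kernel

theorem position_of_marker_isPrefix_drop :
    ∀ c, ∀ b ∈ blocks c, ∀ d a, ∀ i < (b ++ marker d).length,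
      marker a <+: (b ++ marker d).drop i → (i = 0 ∧ a = c) ∨ i = b.length := by
  decide +kernel

theorem isMarking_marker : IsMarking himg marker where
  ne_nil c := by simp [marker, shortBlock]
  length_eq c d := by simp [marker]
  isPrefix hb := marker_isPrefix_of_mem_blocks _ _ (mem_himg_iff.1 hb)
  eq_nil_or_eq {a c d b x y} hb h := by
    have hlt : x.length < (b ++ marker d).length := by
      rw [h]
      simp [marker, shortBlock]
    have hpos := position_of_marker_isPrefix_drop c b (mem_himg_iff.1 hb) d a x.length hlt
      (by simp [h])
    refine hpos.imp (And.imp_left List.length_eq_zero_iff.1) fun hxb => ?_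
    exact (List.append_inj (by simpa using h) hxb.symm).1.symm

theorem map_sub_mem_blocks :
    ∀ a c, ∀ b ∈ blocks c, b.map (· - a) ∈ blocks (c - a) := by
  decide +kernel

theorem isSqFree_triple_zero : ∀ b c : Fin 3, 0 ≠ b → b ≠ c →
    ∀ x ∈ blocks 0, ∀ y ∈ blocks b, ∀ z ∈ blocks c, isSqFree (x ++ y ++ z) := by
  decide +kernel

theorem sqFree_triple {a b c : Fin 3} {x y z : List (Fin 3)} (hab : a ≠ b) (hbc : b ≠ c)
    (hx : x ∈ himg a) (hy : y ∈ himg b) (hz : z ∈ himg c) : SqFree (x ++ y ++ z) := by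
  rw [mem_himg_iff] at hx hy hz
  refine .of_map (· - a) (sqFree_of_isSqFree ?_)
  rw [List.map_append, List.map_append]
  exact isSqFree_triple_zero (b - a) (c - a) (sub_ne_zero.2 hab.symm).symm
    (sub_left_injective.ne hbc) _ (sub_self a ▸ map_sub_mem_blocks a a x hx)
    _ (map_sub_mem_blocks a b y hy) _ (map_sub_mem_blocks a c z hz)

theorem sqFree_of_mem_substImage_short (w : List (Fin 3)) (hw : SqFree w) (hlen : w.length ≤ 3)
    (v : List (Fin 3)) (hv : v ∈ substImage himg w) : SqFree v := by
  match w with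
  | [] => simp_all [SqFree]
  | [a] =>
    rw [mem_substImage_singleton] at hv
    have hshort : shortBlock.map (· + (a + 1)) ∈ himg (a + 1) := by simp [mem_himg_iff, blocks]
    exact (sqFree_triple (by simp) (by simp) hv hshort hv).of_isInfix
      ⟨[], shortBlock.map (· + (a + 1)) ++ v, by simp⟩
  | [a, b] =>
    obtain ⟨x, hx, y, hy, rfl⟩ := mem_substImage_cons.1 hv
    rw [mem_substImage_singleton] at hy
    have hab := hw.ne_of_cons_cons
    exact (sqFree_triple hab hab.symm hx hy hx).of_isInfix (List.prefix_append _ x).isInfix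
  | [a, b, c] =>
    obtain ⟨x, hx, v', hv', rfl⟩ := mem_substImage_cons.1 hv
    obtain ⟨y, hy, z, hz, rfl⟩ := mem_substImage_cons.1 hv'
    rw [mem_substImage_singleton] at hz
    have hbc := (hw.of_isInfix (List.suffix_cons a [b, c]).isInfix).ne_of_cons_cons
    simpa using sqFree_triple hw.ne_of_cons_cons hbc hx hy hz

theorem eq_of_getLast?_eq_of_mem_himg {c d : Fin 3} {b b' : List (Fin 3)} (hb : b ∈ himg c)
    (hb' : b' ∈ himg d) (h : b.getLast? = b'.getLast?) : c = d := by
  rw [mem_himg_iff] at hb hb'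
  simpa [getLast?_of_mem_blocks _ _ hb, getLast?_of_mem_blocks _ _ hb'] using h

/-- The substitution `h` is square-free: every image of a square-free word is
square-free. -/
theorem image_squarefree (w v : List (Fin 3)) (hw : SqFree w) (hv : IsImage w v) :
    SqFree v :=
  isMarking_marker.sqFree_of_mem_substImage eq_of_getLast?_eq_of_mem_himg
    sqFree_of_mem_substImage_short hw hv
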